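/- (Observation 1: fine-tuning with self-sampling is equivalent to vanilla fine-tuning.) Let α be a finite nonempty type and let m, k be natural numbers. Let p : α^m × α^k → ℝ be a probability mass function, with marginal p₁(u) := ∑_{v ∈ α^k} p(u,v) on α^m and conditional p(v | u) := p(u,v)/p₁(u) whenever p₁(u) > 0. Fix x* ∈ α^m with p₁(x*) > 0. Define the self-sampling target Q(u,v) := δ_{x*}(u) · p(v | x*), the pmf obtained by pinning the head to x* and sampling the tail from the model's own conditional. Then the sampled fine-tuning objective equals the vanilla fine-tuning objective: D_KL(Q ‖ p) = D_KL(δ_{x*} ‖ p₁) = − log p₁(x*). -/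

import Mathlib

/-- Kullback–Leibler divergence between pmfs on a finite type,
summing over the support of `q`. -/
noncomputable def KL {α : Type*} [Fintype α] (q p : α → ℝ) : ℝ :=
  ∑ x ∈ Finset.univ.filter (fun x => 0 < q x), q x * Real.log (q x / p x)

/-!
If the head of `Q` has law `q` and its tail is sampled from the conditional of `p`, then on the
support of `p` the ratio `Q (u, v) / p (u, v) = q u / p₁ u` does not depend on `v`. So
the divergence of `Q` from `p` is the divergence of `q` from `p₁`, each head being weighted by
the total mass `1` of its conditional. Self-sampling is the case where `q` is one-hot.
-/

/-- The one-hot distribution `δ_x`, as a real-valued mass function. -/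
def oneHot {α : Type*} [DecidableEq α] (x : α) : α → ℝ :=
  fun u => if u = x then 1 else 0

/-- The head marginal `p₁` of a mass function on a product. -/
def marginalFst {α β : Type*} [Fintype β] (p : α × β → ℝ) : α → ℝ :=
  fun u => ∑ v, p (u, v)

/-- The conditional `p (v | u)` of the tail given the head. It is identically `0` for a head with
`marginalFst p u = 0`, as division by zero gives `0`. -/
noncomputable def condSnd {α β : Type*} [Fintype β] (p : α × β → ℝ) (u : α) : β → ℝ :=
  fun v => p (u, v) / marginalFst p u

section OneHot

variable {α : Type*} [DecidableEq α]

theorem oneHot_self (x : α) : oneHot x x = 1 :=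
  if_pos rfl

theorem oneHot_of_ne {x u : α} (h : u ≠ x) : oneHot x u = 0 :=
  if_neg h

theorem oneHot_nonneg (x u : α) : 0 ≤ oneHot x u := by
  unfold oneHot
  split_ifs <;> norm_num

end OneHot

section KL

variable {α : Type*} [Fintype α]

theorem KL_eq_sum_univ {q : α → ℝ} (hq : ∀ x, 0 ≤ q x) (p : α → ℝ) :
    KL q p = ∑ x, q x * Real.log (q x / p x) := by
  refine Finset.sum_filter_of_ne fun x _ hne => (hq x).lt_of_ne' ?_
  exact left_ne_zero_of_mul hne

theorem KL_oneHot [DecidableEq α] (x : α) (p : α → ℝ) : KL (oneHot x) p = -Real.log (p x) := by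
  rw [KL_eq_sum_univ (oneHot_nonneg x), Fintype.sum_eq_single x]
  · rw [oneHot_self, one_mul, one_div, Real.log_inv]
  · intro u hu
    rw [oneHot_of_ne hu, zero_mul]

end KL

section Conditional

variable {α β : Type*} [Fintype β] {p : α × β → ℝ}

theorem marginalFst_nonneg (hp : ∀ z, 0 ≤ p z) (u : α) : 0 ≤ marginalFst p u :=
  Finset.sum_nonneg fun v _ => hp (u, v)

theorem condSnd_nonneg (hp : ∀ z, 0 ≤ p z) (u : α) (v : β) : 0 ≤ condSnd p u v :=
  div_nonneg (hp (u, v)) (marginalFst_nonneg hp u)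

theorem sum_condSnd {u : α} (hu : marginalFst p u ≠ 0) : ∑ v, condSnd p u v = 1 := by
  unfold condSnd
  rw [← Finset.sum_div]
  exact div_self hu

theorem mul_condSnd_div {u : α} {v : β} (hv : p (u, v) ≠ 0) (a : ℝ) :
    a * condSnd p u v / p (u, v) = a / marginalFst p u := by
  unfold condSnd
  field_simp

theorem KL_mul_condSnd [Fintype α] {q : α → ℝ} (hq : ∀ u, 0 ≤ q u) (hp : ∀ z, 0 ≤ p z)
    (hqp : ∀ u, q u ≠ 0 → marginalFst p u ≠ 0) :
    KL (fun z => q z.1 * condSnd p z.1 z.2) p = KL q (marginalFst p) := by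
  have log_ratio (u : α) (v : β) :
      q u * condSnd p u v * Real.log (q u * condSnd p u v / p (u, v)) =
        condSnd p u v * (q u * Real.log (q u / marginalFst p u)) := by
    by_cases hv : p (u, v) = 0
    · simp [condSnd, hv]
    · rw [mul_condSnd_div hv]
      ring
  have joint_nonneg (z : α × β) : 0 ≤ q z.1 * condSnd p z.1 z.2 :=
    mul_nonneg (hq z.1) (condSnd_nonneg hp z.1 z.2)
  rw [KL_eq_sum_univ joint_nonneg, KL_eq_sum_univ hq, Fintype.sum_prod_type]
  refine Finset.sum_congr rfl fun u _ => ?_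
  simp only [log_ratio, ← Finset.sum_mul]
  by_cases hu : q u = 0
  · simp only [hu, zero_mul, mul_zero]
  · rw [sum_condSnd (hqp u hu), one_mul]

end Conditional

theorem oneHot_mul_condSnd {α β : Type*} [DecidableEq α] [Fintype β] (p : α × β → ℝ) (x u : α)
    (v : β) : oneHot x u * condSnd p x v = oneHot x u * condSnd p u v := by
  obtain rfl | hu := eq_or_ne u x
  · rfl
  · simp only [oneHot_of_ne hu, zero_mul]

theorem selfSampling_ft_eq_vanilla_ft_general {α β : Type*} [Fintype α] [DecidableEq α]
    [Fintype β] (p : α × β → ℝ) (hp : ∀ z, 0 ≤ p z) (x : α) (hx : 0 < marginalFst p x) :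
    KL (fun z => oneHot x z.1 * condSnd p x z.2) p = KL (oneHot x) (marginalFst p) ∧
      KL (oneHot x) (marginalFst p) = -Real.log (marginalFst p x) := by
  have abs_cont (u : α) (hu : oneHot x u ≠ 0) : marginalFst p u ≠ 0 := by
    obtain rfl : u = x := not_imp_comm.mp oneHot_of_ne hu
    exact hx.ne'
  refine ⟨?_, KL_oneHot x _⟩
  calc KL (fun z => oneHot x z.1 * condSnd p x z.2) p
      = KL (fun z => oneHot x z.1 * condSnd p z.1 z.2) p := by
        congr! 2 with z
        exact oneHot_mul_condSnd p x z.1 z.2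
    _ = KL (oneHot x) (marginalFst p) := KL_mul_condSnd (oneHot_nonneg x) hp abs_cont

theorem selfSampling_ft_eq_vanilla_ft {α : Type*} [Fintype α] [Nonempty α] [DecidableEq α]
    (m k : ℕ) (p : ((Fin m → α) × (Fin k → α)) → ℝ)
    (hp0 : ∀ z, 0 ≤ p z) (hp1 : ∑ z, p z = 1)
    (xstar : Fin m → α) (hx : 0 < ∑ v, p (xstar, v)) :
    KL (fun z : (Fin m → α) × (Fin k → α) =>
          (if z.1 = xstar then (1 : ℝ) else 0)
            * (p (xstar, z.2) / (∑ v', p (xstar, v')))) p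
      = KL (fun u : Fin m → α => if u = xstar then (1 : ℝ) else 0)
           (fun u : Fin m → α => ∑ v, p (u, v))
    ∧ KL (fun u : Fin m → α => if u = xstar then (1 : ℝ) else 0)
         (fun u : Fin m → α => ∑ v, p (u, v))
        = - Real.log (∑ v, p (xstar, v)) :=
  selfSampling_ft_eq_vanilla_ft_general p hp0 xstar hx
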